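/- Let λ = (λ_1 ≥ … ≥ λ_k ≥ 1) be a partition with k positive parts and let n ≥ k. Then, as polynomials in x_1,…,x_n: s^{[n]}_λ · s^{[2,n]}_{(λ_1,…,λ_{k−1})} = s^{[2,n]}_λ · s^{[n]}_{(λ_1,…,λ_{k−1})} + x_1 · s^{[n]}_{(λ_1−1,…,λ_k−1)} · s^{[2,n]}_{(λ_1+1,…,λ_{k−1}+1)}. -/

import Mathlib

/-- A semistandard Young tableau of shape `(lam 0, lam 1, …, lam (k-1))` (so `lam i` is the
length of the `(i+1)`-st row), with entries in `{a, a+1, …, b}`: rows weakly increase,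
columns strictly increase.  Entries outside the shape are `0`. -/
structure SSYT (k : ℕ) (lam : ℕ → ℤ) (a b : ℕ) where
  entry : ℕ → ℕ → ℕ
  zero_outside : ∀ i j : ℕ, ¬(i < k ∧ (j : ℤ) < lam i) → entry i j = 0
  lower : ∀ i j : ℕ, i < k → (j : ℤ) < lam i → a ≤ entry i j
  upper : ∀ i j : ℕ, i < k → (j : ℤ) < lam i → entry i j ≤ b
  row_weak : ∀ i j₁ j₂ : ℕ, i < k → j₁ ≤ j₂ → (j₂ : ℤ) < lam i → entry i j₁ ≤ entry i j₂
  col_strict : ∀ i₁ i₂ j : ℕ, i₁ < i₂ → i₂ < k → (j : ℤ) < lam i₂ → entry i₁ j < entry i₂ j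

/-- The monomial `Π_i x_i^{m(i,T)}` of a tableau: the product of `x_{T(c)}` over the
cells `c` of the shape. -/
noncomputable def SSYT.weight {k : ℕ} {lam : ℕ → ℤ} {a b : ℕ} (T : SSYT k lam a b) :
    MvPolynomial ℕ ℤ :=
  ∏ i ∈ Finset.range k, ∏ j ∈ Finset.range (lam i).toNat, MvPolynomial.X (T.entry i j)

/-- `(lam 0, …, lam (k-1))` is a partition: weakly decreasing with nonnegative entries. -/
def IsPartitionSeq (k : ℕ) (lam : ℕ → ℤ) : Prop :=
  (∀ i, i + 1 < k → lam (i + 1) ≤ lam i) ∧ (∀ i, i < k → 0 ≤ lam i)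

/-- The Schur polynomial `s^{[a,b]}_lam = Σ_T Π_i x_i^{m(i,T)}`, the sum running over all
semistandard Young tableaux of shape `lam` with entries in `{a,…,b}`; by convention it is
`0` if `lam` is not a partition. -/
noncomputable def schur (k : ℕ) (lam : ℕ → ℤ) (a b : ℕ) : MvPolynomial ℕ ℤ :=
  letI := Classical.dec (IsPartitionSeq k lam)
  if IsPartitionSeq k lam then ∑ᶠ T : SSYT k lam a b, T.weight else 0

/-!
Removing the entries `b` from a tableau with entries in `[a, b]` removes a horizontal strip from
its shape, which expresses `s^{[a,b]}_λ` through the polynomials `s^{[a,b-1]}_μ` with `μ`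
interlacing `λ`. Jacobi–Trudi determinants obey the same recursion, because the complete
homogeneous polynomials satisfy `h_m^{[a,b-1]} = h_m^{[a,b]} - x_b h_{m-1}^{[a,b]}`; hence
`s_λ = det (h_{λ_i - i + j})`.

Deleting the smallest variable `x_a` likewise gives `g_m = h_m - x_a h_{m-1}`, with `h` over
`[a, b]` and `g` over `[a+1, b]`. Column operations then present the six determinants of the
identity, one of them multiplied by `x_a`, as maximal minors of the `k × (k + 1)` matrix with rows
`(h_{c_i}, g_{c_i}, g_{c_i+1}, …, g_{c_i+k-1})`, `c_i = λ_i - i`, or of its first `k - 1` rows,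
and the identity is a three-term Plücker relation.
-/

section CompleteHomogeneous

variable {ι R : Type*} [CommRing R]

/-- The complete homogeneous symmetric polynomial of degree `m` in the elements `x i`, `i ∈ s`,
as a coefficient of its generating series `∏ i ∈ s, (1 - x i t)⁻¹`. The degree is an integer
since the entries of the Jacobi–Trudi matrix involve negative degrees, where the value is `0`. -/
noncomputable def completeHomogeneous (x : ι → R) (s : Finset ι) (m : ℤ) : R :=
  if 0 ≤ m then PowerSeries.coeff m.toNat (∏ i ∈ s, PowerSeries.mk (x i ^ ·)) else 0

theorem completeHomogeneous_of_neg (x : ι → R) (s : Finset ι) {m : ℤ} (hm : m < 0) :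
    completeHomogeneous x s m = 0 :=
  if_neg hm.not_ge

theorem completeHomogeneous_empty (x : ι → R) (m : ℤ) :
    completeHomogeneous x ∅ m = if m = 0 then 1 else 0 := by
  simp only [completeHomogeneous, Finset.prod_empty, PowerSeries.coeff_one]
  grind

theorem mk_pow_mul_one_sub_C_mul_X (y : R) :
    PowerSeries.mk (y ^ ·) * (1 - PowerSeries.C y * PowerSeries.X) = 1 := by
  simpa [PowerSeries.rescale_mk, PowerSeries.rescale_X] using
    congrArg (PowerSeries.rescale y) (PowerSeries.mk_one_mul_one_sub_eq_one R)

theorem completeHomogeneous_eq_sub_of_insert [DecidableEq ι] (x : ι → R) {s : Finset ι} {i : ι}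
    (hi : i ∉ s) (m : ℤ) :
    completeHomogeneous x s m =
      completeHomogeneous x (insert i s) m - x i * completeHomogeneous x (insert i s) (m - 1) := by
  rcases lt_or_ge m 0 with hm | hm
  · simp [completeHomogeneous_of_neg, hm, show m - 1 < 0 by omega]
  have hseries : ∏ j ∈ s, PowerSeries.mk (x j ^ ·) = (∏ j ∈ insert i s, PowerSeries.mk (x j ^ ·)) -
      PowerSeries.C (x i) * (∏ j ∈ insert i s, PowerSeries.mk (x j ^ ·)) * PowerSeries.X := by
    rw [Finset.prod_insert hi]
    linear_combination
      -(∏ j ∈ s, PowerSeries.mk (x j ^ ·)) * mk_pow_mul_one_sub_C_mul_X (x i)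
  lift m to ℕ using hm
  simp only [completeHomogeneous]
  rw [hseries]
  cases m with
  | zero => simp
  | succ m => simp [PowerSeries.coeff_succ_mul_X, mul_assoc, show (0 : ℤ) ≤ m + 1 by omega]

end CompleteHomogeneous

section Determinants

variable {R : Type*} [CommRing R]

theorem det_eq_of_forall_row_eq_smul_add_succ {n : ℕ} {A B : Matrix (Fin (n + 1)) (Fin (n + 1)) R}
    (c : Fin n → R) (hlast : ∀ j, A (Fin.last n) j = B (Fin.last n) j)
    (hsucc : ∀ i j, A i.castSucc j = B i.castSucc j + c i * A i.succ j) : A.det = B.det := by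
  rw [← Matrix.det_submatrix_equiv_self Fin.revPerm A,
    ← Matrix.det_submatrix_equiv_self Fin.revPerm B]
  refine Matrix.det_eq_of_forall_row_eq_smul_add_pred (fun i => c i.rev) (fun j => ?_) fun i j => ?_
  · simp [hlast]
  · simp [Fin.rev_succ, Fin.rev_castSucc, hsucc]

theorem det_of_sum_mul {n α : Type*} [Fintype n] [DecidableEq n] (s : n → Finset α)
    (c : n → α → R) (f : n → α → n → R) :
    (Matrix.of fun i j => ∑ m ∈ s i, c i m * f i m j).det =
      ∑ r ∈ Fintype.piFinset s, (∏ i, c i (r i)) * (Matrix.of fun i j => f i (r i) j).det := by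
  have hrows : (Matrix.of fun i j => ∑ m ∈ s i, c i m * f i m j) =
      fun i => ∑ m ∈ s i, c i m • f i m := by
    ext i j
    simp [Finset.sum_apply]
  rw [hrows]
  refine ((Matrix.detRowAlternating (R := R) (n := n)).toMultilinearMap.map_sum_finset
    (fun i m => c i m • f i m) s).trans (Finset.sum_congr rfl fun r _ => ?_)
  exact Matrix.det_mul_column (fun i => c i (r i)) (Matrix.of fun i j => f i (r i) j)

theorem sum_neg_one_pow_mul_det_submatrix_succAbove {n : ℕ} (M : Matrix (Fin n) (Fin (n + 1)) R)
    (i : Fin n) :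
    ∑ j : Fin (n + 1), (-1) ^ (j : ℕ) * M i j * (M.submatrix id j.succAbove).det = 0 := by
  have hrepeat : (Matrix.of (Fin.cons (M i) M : Fin (n + 1) → Fin (n + 1) → R)).det = 0 :=
    Matrix.det_zero_of_row_eq (Fin.succ_ne_zero i).symm rfl
  rwa [Matrix.det_succ_row_zero] at hrepeat

theorem sum_neg_one_pow_mul_det_mul_det_updateCol {n : ℕ} {m : Type*} [Fintype m] [DecidableEq m]
    (M : Matrix (Fin n) (Fin (n + 1)) R) (N : Matrix m m R) (rows : m → Fin n) (l : m) :
    ∑ j : Fin (n + 1), (-1) ^ (j : ℕ) * (M.submatrix id j.succAbove).det *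
      (N.updateCol l fun i => M (rows i) j).det = 0 := by
  have hcol : ∑ j : Fin (n + 1), ((-1) ^ (j : ℕ) * (M.submatrix id j.succAbove).det) •
      (fun i => M (rows i) j) = 0 := by
    ext i
    simpa [Finset.sum_apply, mul_right_comm] using
      sum_neg_one_pow_mul_det_submatrix_succAbove M (rows i)
  have hcramer := congrFun (congrArg N.cramer hcol) l
  simp only [map_sum, map_smul, map_zero, Finset.sum_apply, Pi.zero_apply] at hcramer
  simpa only [Matrix.cramer_apply, Pi.smul_apply, smul_eq_mul] using hcramer

theorem det_submatrix_finRotate {q : ℕ} (N : Matrix (Fin (q + 1)) (Fin (q + 1)) R) :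
    (N.submatrix id (finRotate (q + 1))).det = (-1) ^ q * N.det := by
  simp [Matrix.det_permute', sign_finRotate]

/-- Replacing the first column of the second minor on the left by each column of `M` in turn, only
columns `0`, `1` and the last one contribute: every other one is repeated. -/
theorem det_plucker_three_term {q : ℕ} (M : Matrix (Fin (q + 2)) (Fin (q + 3)) R) :
    (M.submatrix id (Fin.succAbove 1)).det *
        (M.submatrix Fin.castSucc (Fin.succ ∘ Fin.castSucc)).det =
      (M.submatrix id Fin.succ).det *
          (M.submatrix Fin.castSucc (Fin.castSucc ∘ Fin.succAbove 1)).det +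
        (M.submatrix id Fin.castSucc).det *
          (M.submatrix Fin.castSucc (Fin.succ ∘ Fin.succ)).det := by
  set N := M.submatrix Fin.castSucc (Fin.succ ∘ Fin.castSucc)
  have hrel := sum_neg_one_pow_mul_det_mul_det_updateCol M N Fin.castSucc 0
  have hfirst : (N.updateCol 0 fun i => M i.castSucc 0) =
      M.submatrix Fin.castSucc (Fin.castSucc ∘ Fin.succAbove 1) := by
    ext i j
    induction j using Fin.cases <;> simp [N]
  have hsecond : (N.updateCol 0 fun i => M i.castSucc 1) = N :=
    Matrix.updateCol_eq_self _ _
  have hmiddle (j : Fin q) :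
      (N.updateCol 0 fun i => M i.castSucc j.castSucc.succ.succ).det = 0 := by
    refine Matrix.det_zero_of_column_eq (Fin.succ_ne_zero j).symm fun i => ?_
    rw [Matrix.updateCol_self, Matrix.updateCol_ne (Fin.succ_ne_zero j)]
    rfl
  have hlast : (N.updateCol 0 fun i => M i.castSucc (Fin.last (q + 2))).det =
      (-1) ^ q * (M.submatrix Fin.castSucc (Fin.succ ∘ Fin.succ)).det := by
    have hrotate : (N.updateCol 0 fun i => M i.castSucc (Fin.last (q + 2))).submatrix id
        (finRotate (q + 1)) = M.submatrix Fin.castSucc (Fin.succ ∘ Fin.succ) := by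
      ext i j
      induction j using Fin.lastCases <;> simp [N]
    rw [← hrotate, det_submatrix_finRotate, ← mul_assoc, ← mul_pow]
    simp
  have hsign : (-1 : R) ^ (q + 2) * (-1) ^ q = 1 := by
    rw [← pow_add]
    exact Even.neg_one_pow ⟨q + 1, by ring⟩
  rw [Fin.sum_univ_succ, Fin.sum_univ_succ, Fin.sum_univ_castSucc] at hrel
  simp only [Fin.succ_zero_eq_one, Fin.succ_last, Nat.succ_eq_add_one, hfirst, hsecond, hmiddle,
    hlast, mul_zero, Finset.sum_const_zero, zero_add, Fin.val_zero, Fin.val_one, Fin.val_last,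
    Fin.succAbove_zero, Fin.succAbove_last] at hrel
  linear_combination (M.submatrix id Fin.castSucc).det *
    (M.submatrix Fin.castSucc (Fin.succ ∘ Fin.succ)).det * hsign - hrel

end Determinants

section JacobiTrudi

variable {R : Type*} [CommRing R] {k : ℕ} {lam : ℕ → ℤ} {H G : ℤ → R} {x : R}

/-- The Jacobi–Trudi matrix `(H (lam i - i + j))` of the shape `(lam 0, …, lam (k - 1))` formed from
an arbitrary sequence `H` in place of the complete homogeneous polynomials. -/
def jacobiTrudi (k : ℕ) (lam : ℕ → ℤ) (H : ℤ → R) : Matrix (Fin k) (Fin k) R :=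
  Matrix.of fun i j => H (lam i - i + j)

/-- The part of `(lam 0, …, lam (k - 1))` following `lam i`, which is `0` for the last part. -/
def nextPart (k : ℕ) (lam : ℕ → ℤ) (i : ℕ) : ℤ :=
  if i + 1 < k then lam (i + 1) else 0

/-- The sequences `r` interlacing with `lam`, that is, `lam (i + 1) ≤ r i ≤ lam i`: the shapes
obtained from `lam` by removing a horizontal strip. -/
noncomputable def interlacing (k : ℕ) (lam : ℕ → ℤ) : Finset (Fin k → ℤ) :=
  Fintype.piFinset fun i => Finset.Icc (nextPart k lam i) (lam i)

/-- The shape `ℕ → ℤ` with the parts `r 0, …, r (k - 1)` and junk value `0` beyond them. -/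
def zeroExtend (r : Fin k → ℤ) : ℕ → ℤ :=
  fun i => if h : i < k then r ⟨i, h⟩ else 0

@[simp]
theorem zeroExtend_val (r : Fin k → ℤ) (i : Fin k) : zeroExtend r i = r i := by
  simp [zeroExtend]

theorem IsPartitionSeq.le_of_le (hlam : IsPartitionSeq k lam) {i j : ℕ} (hij : i ≤ j)
    (hj : j < k) : lam j ≤ lam i := by
  induction j, hij using Nat.le_induction with
  | base => rfl
  | succ j _ ih => exact (hlam.1 j hj).trans (ih (by omega))

theorem IsPartitionSeq.nextPart_nonneg (hlam : IsPartitionSeq k lam) (i : ℕ) :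
    0 ≤ nextPart k lam i := by
  unfold nextPart
  split_ifs with h
  exacts [hlam.2 _ h, le_rfl]

theorem IsPartitionSeq.nextPart_le (hlam : IsPartitionSeq k lam) {i : ℕ} (hi : i < k) :
    nextPart k lam i ≤ lam i := by
  unfold nextPart
  split_ifs with h
  exacts [hlam.1 i h, hlam.2 i hi]

theorem sum_Icc_pow_mul (hG : ∀ m, G m = H m - x * H (m - 1)) {c d : ℤ} (hcd : c ≤ d) :
    ∑ m ∈ Finset.Icc c d, x ^ (d - m).toNat * G m =
      H d - x ^ ((d - c).toNat + 1) * H (c - 1) := by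
  induction d, hcd using Int.leInduction with
  | base => simp [hG]
  | succ d hcd ih =>
    have hIcc : Finset.Icc c (d + 1) = insert (d + 1) (Finset.Icc c d) := by
      ext m
      simp only [Finset.mem_Icc, Finset.mem_insert]
      omega
    have hfactor : ∑ m ∈ Finset.Icc c d, x ^ (d + 1 - m).toNat * G m =
        x * ∑ m ∈ Finset.Icc c d, x ^ (d - m).toNat * G m := by
      rw [Finset.mul_sum]
      refine Finset.sum_congr rfl fun m hm => ?_
      have := Finset.mem_Icc.mp hm
      rw [show (d + 1 - m).toNat = (d - m).toNat + 1 by omega]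
      ring
    rw [hIcc, Finset.sum_insert (by simp), hfactor, ih, hG,
      show (d + 1 - c).toNat = (d - c).toNat + 1 by omega,
      sub_self, Int.toNat_zero, add_sub_cancel_right]
    ring

/-- Subtracting `x ^ (lam i - lam (i + 1) + 1)` times the next row from the `i`-th one makes each
entry telescope into a sum over the possible `i`-th parts of an interlacing shape. -/
theorem det_jacobiTrudi_eq_det_of_sum (hG : ∀ m, G m = H m - x * H (m - 1))
    (hlam : IsPartitionSeq k lam) (hneg : ∀ m < 0, H m = 0) :
    (jacobiTrudi k lam H).det = (Matrix.of fun i j : Fin k =>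
      ∑ m ∈ Finset.Icc (nextPart k lam i) (lam i),
        x ^ (lam i - m).toNat * G (m - i + j)).det := by
  rcases k with _ | k
  · simp
  have hentry (i j : Fin (k + 1)) : ∑ m ∈ Finset.Icc (nextPart (k + 1) lam i) (lam i),
        x ^ (lam i - m).toNat * G (m - i + j) = H (lam i - i + j) -
      x ^ ((lam i - nextPart (k + 1) lam i).toNat + 1) * H (nextPart (k + 1) lam i - 1 - i + j) :=
    sum_Icc_pow_mul (H := fun m => H (m - i + j)) (G := fun m => G (m - i + j))
      (fun m => by rw [hG]; ring_nf) (hlam.nextPart_le i.2)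
  refine det_eq_of_forall_row_eq_smul_add_succ
    (fun i => x ^ ((lam i - nextPart (k + 1) lam i).toNat + 1)) (fun j => ?_) fun i j => ?_
  · have hzero : H (nextPart (k + 1) lam k - 1 - k + j) = 0 :=
      hneg _ (by simp only [nextPart]; grind)
    simp [jacobiTrudi, hentry, hzero]
  · have hnext : nextPart (k + 1) lam i = lam (i + 1) := by simp [nextPart]
    simp only [jacobiTrudi, Matrix.of_apply, hentry, Fin.val_castSucc, Fin.val_succ, hnext]
    push_cast
    ring_nf

theorem det_jacobiTrudi_eq_sum_interlacing (hG : ∀ m, G m = H m - x * H (m - 1))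
    (hlam : IsPartitionSeq k lam) (hneg : ∀ m < 0, H m = 0) :
    (jacobiTrudi k lam H).det = ∑ r ∈ interlacing k lam,
      (∏ i : Fin k, x ^ (lam i - r i).toNat) * (jacobiTrudi k (zeroExtend r) G).det := by
  rw [det_jacobiTrudi_eq_det_of_sum hG hlam hneg]
  simpa [jacobiTrudi, interlacing] using
    det_of_sum_mul (fun i : Fin k => Finset.Icc (nextPart k lam i) (lam i))
      (fun i m => x ^ (lam i - m).toNat) (fun i m j => G (m - i + j))

theorem det_jacobiTrudi_succ_eq_det_cons (hG : ∀ m, G m = H m - x * H (m - 1))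
    (q : ℕ) (lam : ℕ → ℤ) :
    (jacobiTrudi (q + 1) lam H).det = (Matrix.of fun i : Fin (q + 1) =>
      Fin.cons (H (lam i - i)) fun j : Fin q => G (lam i - i + j + 1)).det := by
  refine Matrix.det_eq_of_forall_col_eq_smul_add_pred (fun _ => x) (fun i => ?_) fun i j => ?_
  · simp [jacobiTrudi]
  · simp only [jacobiTrudi, Matrix.of_apply, Fin.cons_succ, Fin.val_castSucc, Fin.val_succ, hG]
    push_cast
    ring_nf

theorem det_cons_eq_mul_det_jacobiTrudi_sub_one (hG : ∀ m, G m = H m - x * H (m - 1))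
    (q : ℕ) (lam : ℕ → ℤ) :
    (Matrix.of fun i : Fin (q + 2) =>
      Fin.cons (H (lam i - i)) fun j : Fin (q + 1) => G (lam i - i + j)).det =
      x * (jacobiTrudi (q + 2) (fun i => lam i - 1) H).det := by
  set M : Matrix (Fin (q + 2)) (Fin (q + 2)) R := Matrix.of fun i =>
    Fin.cons (H (lam i - i)) fun j : Fin (q + 1) => G (lam i - i + j)
  calc M.det = (M.updateCol 0 fun i => M i 0 + (-1 : R) • M i 1).det :=
        (Matrix.det_updateCol_add_smul_self M zero_ne_one _).symm
    _ = (M.updateCol 0 (x • fun i : Fin (q + 2) => H (lam i - i - 1))).det := by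
        congr 2
        ext i
        simp [M, hG, Fin.cons_one]
    _ = x * (M.updateCol 0 fun i : Fin (q + 2) => H (lam i - i - 1)).det :=
        Matrix.det_updateCol_smul _ _ _ _
    _ = x * (jacobiTrudi (q + 2) (fun i => lam i - 1) H).det := by
        rw [det_jacobiTrudi_succ_eq_det_cons hG]
        congr 2
        ext i j
        induction j using Fin.cases with
        | zero => simp [sub_right_comm]
        | succ j =>
          have hdegree : lam i - 1 - i + j + 1 = lam i - i + j := by ring
          simp [M, hdegree]

theorem det_jacobiTrudi_mul_det_jacobiTrudi (hG : ∀ m, G m = H m - x * H (m - 1))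
    (k : ℕ) (lam : ℕ → ℤ) :
    (jacobiTrudi (k + 1) lam H).det * (jacobiTrudi k lam G).det =
      (jacobiTrudi (k + 1) lam G).det * (jacobiTrudi k lam H).det +
        x * (jacobiTrudi (k + 1) (fun i => lam i - 1) H).det *
          (jacobiTrudi k (fun i => lam i + 1) G).det := by
  rcases k with _ | q
  · simp [jacobiTrudi, hG]
  set M : Matrix (Fin (q + 2)) (Fin (q + 3)) R := Matrix.of fun i =>
    Fin.cons (H (lam i - i)) fun j : Fin (q + 2) => G (lam i - i + j)
  have hH : (jacobiTrudi (q + 2) lam H).det = (M.submatrix id (Fin.succAbove 1)).det := by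
    rw [det_jacobiTrudi_succ_eq_det_cons hG]
    congr 1
    ext i j
    induction j using Fin.cases <;> simp [M, add_assoc]
  have hH' : (jacobiTrudi (q + 1) lam H).det =
      (M.submatrix Fin.castSucc (Fin.castSucc ∘ Fin.succAbove 1)).det := by
    rw [det_jacobiTrudi_succ_eq_det_cons hG]
    congr 1
    ext i j
    induction j using Fin.cases <;> simp [M, add_assoc]
  have hG₀ : jacobiTrudi (q + 2) lam G = M.submatrix id Fin.succ := rfl
  have hG₀' : jacobiTrudi (q + 1) lam G =
      M.submatrix Fin.castSucc (Fin.succ ∘ Fin.castSucc) := rfl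
  have hG₁' : jacobiTrudi (q + 1) (fun i => lam i + 1) G =
      M.submatrix Fin.castSucc (Fin.succ ∘ Fin.succ) := by
    ext i j
    have hdegree : lam i + 1 - i + j = lam i - i + (j + 1) := by ring
    simp [jacobiTrudi, M, hdegree]
  have hx : x * (jacobiTrudi (q + 2) (fun i => lam i - 1) H).det =
      (M.submatrix id Fin.castSucc).det := by
    rw [← det_cons_eq_mul_det_jacobiTrudi_sub_one hG]
    congr 1
    ext i j
    induction j using Fin.cases <;> simp [M]
  rw [hH, hH', hx, hG₀, hG₀', hG₁', det_plucker_three_term]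

theorem det_jacobiTrudi_ite_eq_one (hzero : ∀ i < k, lam i = 0) :
    (jacobiTrudi k lam fun m => if m = 0 then (1 : R) else 0).det = 1 := by
  have hone : (jacobiTrudi k lam fun m => if m = 0 then (1 : R) else 0) = 1 := by
    ext i j
    simp only [jacobiTrudi, Matrix.of_apply, hzero i i.2, Matrix.one_apply, Fin.ext_iff]
    grind
  rw [hone, Matrix.det_one]

theorem det_jacobiTrudi_ite_eq_zero (hk : 0 < k) (hpos : 0 < lam 0) :
    (jacobiTrudi k lam fun m => if m = 0 then (1 : R) else 0).det = 0 :=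
  Matrix.det_eq_zero_of_row_eq_zero ⟨0, hk⟩ fun j => if_neg (by simp only; omega)

end JacobiTrudi

section Tableaux

variable {k a b : ℕ} {lam mu : ℕ → ℤ}

/-- `mu` arises from `lam` by removing a horizontal strip: `lam (i + 1) ≤ mu i ≤ lam i`. -/
def Interlaces (k : ℕ) (mu lam : ℕ → ℤ) : Prop :=
  ∀ i < k, nextPart k lam i ≤ mu i ∧ mu i ≤ lam i

theorem mem_interlacing {r : Fin k → ℤ} :
    r ∈ interlacing k lam ↔ Interlaces k (zeroExtend r) lam := by
  simp only [interlacing, Fintype.mem_piFinset, Finset.mem_Icc, Interlaces, Fin.forall_iff]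
  exact forall₂_congr fun i hi => by simp [zeroExtend, hi]

theorem Interlaces.nonneg (hmu : Interlaces k mu lam) (hlam : IsPartitionSeq k lam) {i : ℕ}
    (hi : i < k) : 0 ≤ mu i :=
  (hlam.nextPart_nonneg i).trans (hmu i hi).1

theorem Interlaces.le_of_lt (hmu : Interlaces k mu lam) (hlam : IsPartitionSeq k lam) {i j : ℕ}
    (hij : i < j) (hj : j < k) : lam j ≤ mu i := by
  have hnext := (hmu i (hij.trans hj)).1
  rw [nextPart, if_pos (by omega)] at hnext
  exact (hlam.le_of_le hij hj).trans hnext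

theorem Interlaces.isPartitionSeq (hmu : Interlaces k mu lam) (hlam : IsPartitionSeq k lam) :
    IsPartitionSeq k mu :=
  ⟨fun i hi => (hmu (i + 1) hi).2.trans (hmu.le_of_lt hlam (Nat.lt_succ_self i) hi),
    fun _ hi => hmu.nonneg hlam hi⟩

attribute [ext] SSYT

namespace SSYT

instance : Finite (SSYT k lam a b) := by
  let entries (T : SSYT k lam a b) (i : Fin k) (j : Fin (lam i).toNat) : Fin (b + 1) :=
    ⟨T.entry i j, Nat.lt_succ_of_le (T.upper i j i.2 (by omega))⟩
  refine Finite.of_injective entries fun S T hST => ?_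
  ext i j
  by_cases hij : i < k ∧ (j : ℤ) < lam i
  · exact congrArg Fin.val (congrFun₂ hST ⟨i, hij.1⟩ ⟨j, by simp only; omega⟩)
  · rw [S.zero_outside i j hij, T.zero_outside i j hij]

/-- The tableau of shape `lam` obtained from `S` by filling the horizontal strip `lam / mu` with
the new largest entry `b + 1`. -/
def addStrip (hlam : IsPartitionSeq k lam) (hmu : Interlaces k mu lam) (hab : a ≤ b + 1)
    (S : SSYT k mu a b) : SSYT k lam a (b + 1) where
  entry i j := if i < k ∧ (j : ℤ) < mu i then S.entry i j else
    if i < k ∧ (j : ℤ) < lam i then b + 1 else 0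
  zero_outside i j hij := by
    have := hmu i
    grind
  lower i j hi hj := by
    have := S.lower i j hi
    grind
  upper i j hi hj := by
    have := S.upper i j hi
    grind
  row_weak i j₁ j₂ hi hj hj₂ := by
    have := S.row_weak i j₁ j₂ hi hj
    have := S.upper i j₁ hi
    grind
  col_strict i₁ i₂ j hi hi₂ hj := by
    have := hmu.le_of_lt hlam hi hi₂
    have := S.col_strict i₁ i₂ j hi hi₂
    have := S.upper i₁ j (hi.trans hi₂)
    grind

theorem addStrip_weight (hlam : IsPartitionSeq k lam) (hmu : Interlaces k mu lam) (hab : a ≤ b + 1)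
    (S : SSYT k mu a b) : (S.addStrip hlam hmu hab).weight =
      (∏ i : Fin k, MvPolynomial.X (b + 1) ^ (lam i - mu i).toNat) * S.weight := by
  rw [weight, weight, Finset.prod_range, Finset.prod_range, ← Finset.prod_mul_distrib]
  refine Finset.prod_congr rfl fun i _ => ?_
  have hle := (hmu i i.2).2
  have hnonneg := hmu.nonneg hlam i.2
  have hlength : (lam i).toNat = (mu i).toNat + (lam i - mu i).toNat := by omega
  have hold : ∀ j < (mu i).toNat, (S.addStrip hlam hmu hab).entry i j = S.entry i j :=
    fun j hj => if_pos ⟨i.2, by omega⟩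
  have hnew : ∀ j < (lam i - mu i).toNat,
      (S.addStrip hlam hmu hab).entry i ((mu i).toNat + j) = b + 1 :=
    fun j hj => (if_neg (by omega)).trans (if_pos ⟨i.2, by omega⟩)
  rw [hlength, Finset.prod_range_add, mul_comm]
  congr 1
  · rw [Finset.prod_congr rfl fun j hj => by rw [hnew j (Finset.mem_range.mp hj)],
      Finset.prod_const, Finset.card_range]
  · exact Finset.prod_congr rfl fun j hj => by rw [hold j (Finset.mem_range.mp hj)]

/-- `mu` is the shape formed by the cells of `T` whose entry is at most `b`. -/
def IsSubshape {c : ℕ} (T : SSYT k lam a c) (b : ℕ) (mu : ℕ → ℤ) : Prop :=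
  ∀ i j : ℕ, i < k → ((j : ℤ) < mu i ↔ (j : ℤ) < lam i ∧ T.entry i j ≤ b)

theorem addStrip_isSubshape (hlam : IsPartitionSeq k lam) (hmu : Interlaces k mu lam)
    (hab : a ≤ b + 1) (S : SSYT k mu a b) : (S.addStrip hlam hmu hab).IsSubshape b mu := by
  intro i j hi
  have := S.upper i j hi
  have := hmu i hi
  simp only [addStrip]
  grind

theorem addStrip_injective (hlam : IsPartitionSeq k lam) (hmu : Interlaces k mu lam)
    (hab : a ≤ b + 1) :
    Function.Injective (addStrip hlam hmu hab : SSYT k mu a b → SSYT k lam a (b + 1)) := by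
  intro S S' h
  ext i j
  by_cases hij : i < k ∧ (j : ℤ) < mu i
  · simpa only [addStrip, if_pos hij] using congrArg (fun T => T.entry i j) h
  · rw [S.zero_outside i j hij, S'.zero_outside i j hij]

theorem IsSubshape.eq_of_nonneg {c : ℕ} {T : SSYT k lam a c} {nu : ℕ → ℤ} {i : ℕ}
    (hmu : T.IsSubshape b mu) (hnu : T.IsSubshape b nu) (hi : i < k) (hmu₀ : 0 ≤ mu i)
    (hnu₀ : 0 ≤ nu i) : mu i = nu i := by
  have hiff (j : ℕ) : (j : ℤ) < mu i ↔ (j : ℤ) < nu i := (hmu i j hi).trans (hnu i j hi).symm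
  have := hiff (mu i).toNat
  have := hiff (nu i).toNat
  omega

theorem exists_isSubshape {c : ℕ} (T : SSYT k lam a c) (b : ℕ) :
    ∃ r : Fin k → ℤ, (∀ i, 0 ≤ r i) ∧ T.IsSubshape b (zeroExtend r) := by
  classical
  have hex (i : ℕ) : ∃ j : ℕ, lam i ≤ j ∨ b < T.entry i j :=
    ⟨(lam i).toNat, Or.inl (Int.self_le_toNat _)⟩
  refine ⟨fun i => Nat.find (hex i), fun i => Int.natCast_nonneg _, fun i j hi => ?_⟩
  rw [zeroExtend, dif_pos hi, Int.ofNat_lt, Nat.lt_find_iff]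
  refine ⟨fun h => by simpa using h j le_rfl, fun hcell m hm => ?_⟩
  have hrow := T.row_weak i m j hi hm hcell.1
  simp only [not_or]
  omega

theorem IsSubshape.interlaces {T : SSYT k lam a (b + 1)} (hmu : T.IsSubshape b mu)
    (hlam : IsPartitionSeq k lam) (hmu₀ : ∀ i < k, 0 ≤ mu i) : Interlaces k mu lam := by
  intro i hi
  lift mu i to ℕ using hmu₀ i hi with m hm
  have hcell := hmu i m hi
  have hend := hmu i (lam i).toNat hi
  have hnonneg := hlam.2 i hi
  refine ⟨?_, by omega⟩
  rw [nextPart]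
  split_ifs with hnext
  · by_contra! hlt
    have hdec := hlam.1 i hnext
    have hcol := T.col_strict i (i + 1) m (Nat.lt_succ_self i) hnext hlt
    have hupper := T.upper (i + 1) m hnext hlt
    omega
  · exact Int.natCast_nonneg m

/-- The part of `T` with entries at most `b`, as a tableau of the shape `mu` of that part. -/
def restrict {c : ℕ} (T : SSYT k lam a c) (hmu : T.IsSubshape b mu) : SSYT k mu a b where
  entry i j := if i < k ∧ (j : ℤ) < mu i then T.entry i j else 0
  zero_outside i j hij := if_neg hij
  lower i j hi hj := by
    rw [if_pos ⟨hi, hj⟩]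
    exact T.lower i j hi ((hmu i j hi).mp hj).1
  upper i j hi hj := by
    rw [if_pos ⟨hi, hj⟩]
    exact ((hmu i j hi).mp hj).2
  row_weak i j₁ j₂ hi hj hj₂ := by
    have := T.row_weak i j₁ j₂ hi hj ((hmu i j₂ hi).mp hj₂).1
    grind
  col_strict i₁ i₂ j hi hi₂ hj := by
    have := T.col_strict i₁ i₂ j hi hi₂ ((hmu i₂ j hi₂).mp hj).1
    grind

theorem addStrip_restrict (hlam : IsPartitionSeq k lam) (hmu : Interlaces k mu lam)
    (hab : a ≤ b + 1) {T : SSYT k lam a (b + 1)} (hT : T.IsSubshape b mu) :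
    (T.restrict hT).addStrip hlam hmu hab = T := by
  ext i j
  have := hT i j
  have := T.upper i j
  have := T.zero_outside i j
  simp only [addStrip, restrict]
  grind

theorem addStrip_bijective (hlam : IsPartitionSeq k lam) (hab : a ≤ b + 1) :
    Function.Bijective fun S : Σ r : interlacing k lam, SSYT k (zeroExtend r.1) a b =>
      S.2.addStrip hlam (mem_interlacing.mp S.1.2) hab := by
  constructor
  · rintro ⟨⟨r, hr⟩, S⟩ ⟨⟨r', hr'⟩, S'⟩ h
    have hmu := mem_interlacing.mp hr
    have hmu' := mem_interlacing.mp hr'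
    replace h : S.addStrip hlam hmu hab = S'.addStrip hlam hmu' hab := h
    obtain rfl : r = r' := by
      funext i
      have hsub := S.addStrip_isSubshape hlam hmu hab
      have hsub' := S'.addStrip_isSubshape hlam hmu' hab
      rw [← h] at hsub'
      simpa using hsub.eq_of_nonneg hsub' i.2 (hmu.nonneg hlam i.2) (hmu'.nonneg hlam i.2)
    obtain rfl : S = S' := addStrip_injective hlam hmu hab h
    rfl
  · intro T
    obtain ⟨r, hr₀, hT⟩ := T.exists_isSubshape b
    have hmu : Interlaces k (zeroExtend r) lam :=
      hT.interlaces hlam fun i hi => (hr₀ ⟨i, hi⟩).trans_eq (zeroExtend_val r ⟨i, hi⟩).symm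
    exact ⟨⟨⟨r, mem_interlacing.mpr hmu⟩, T.restrict hT⟩, addStrip_restrict hlam hmu hab hT⟩

end SSYT

theorem schur_eq_sum_interlacing (hlam : IsPartitionSeq k lam) (hab : a ≤ b + 1) :
    schur k lam a (b + 1) = ∑ r ∈ interlacing k lam,
      (∏ i : Fin k, MvPolynomial.X (b + 1) ^ (lam i - r i).toNat) *
        schur k (zeroExtend r) a b := by
  classical
  have := fun (mu : ℕ → ℤ) (c : ℕ) => Fintype.ofFinite (SSYT k mu a c)
  rw [schur, if_pos hlam, finsum_eq_sum_of_fintype,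
    ← (SSYT.addStrip_bijective hlam hab).sum_comp (fun T => T.weight), Fintype.sum_sigma,
    ← Finset.sum_coe_sort (interlacing k lam)]
  refine Finset.sum_congr rfl fun r _ => ?_
  have hmu := mem_interlacing.mp r.2
  rw [schur, if_pos (hmu.isPartitionSeq hlam), finsum_eq_sum_of_fintype, Finset.mul_sum]
  refine Finset.sum_congr rfl fun S _ => ?_
  simp [SSYT.addStrip_weight hlam hmu hab S]

theorem schur_of_forall_eq_zero (hzero : ∀ i < k, lam i = 0) : schur k lam a b = 1 := by
  have hlam : IsPartitionSeq k lam :=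
    ⟨fun i hi => by rw [hzero i (by omega), hzero _ hi], fun i hi => (hzero i hi).ge⟩
  have hoff (i j : ℕ) : ¬(i < k ∧ (j : ℤ) < lam i) := fun hcell => by
    have := hzero i hcell.1
    omega
  let T : SSYT k lam a b :=
    { entry := fun _ _ => 0
      zero_outside := fun _ _ _ => rfl
      lower := fun i j hi hj => (hoff i j ⟨hi, hj⟩).elim
      upper := fun i j hi hj => (hoff i j ⟨hi, hj⟩).elim
      row_weak := fun _ _ _ _ _ _ => le_rfl
      col_strict := fun _ i j _ hi hj => (hoff i j ⟨hi, hj⟩).elim }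
  have hT (S : SSYT k lam a b) : S = T := by
    ext i j
    exact S.zero_outside i j (hoff i j)
  let _ : Unique (SSYT k lam a b) := ⟨⟨T⟩, hT⟩
  rw [schur, if_pos hlam, finsum_unique, SSYT.weight]
  refine Finset.prod_eq_one fun i hi => ?_
  simp [hzero i (Finset.mem_range.mp hi)]

theorem schur_eq_zero_of_lt (hba : b < a) {i : ℕ} (hi : i < k) (hpos : 0 < lam i) :
    schur k lam a b = 0 := by
  have : IsEmpty (SSYT k lam a b) :=
    ⟨fun T => hba.not_ge ((T.lower i 0 hi hpos).trans (T.upper i 0 hi hpos))⟩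
  rw [schur, finsum_of_isEmpty, ite_self]

end Tableaux

theorem schur_eq_det_jacobiTrudi_of_lt {k a b : ℕ} {lam : ℕ → ℤ} (hlam : IsPartitionSeq k lam)
    (hba : b < a) : schur k lam a b =
      (jacobiTrudi k lam (completeHomogeneous MvPolynomial.X (Finset.Icc a b))).det := by
  simp only [Finset.Icc_eq_empty hba.not_ge, funext (completeHomogeneous_empty _)]
  by_cases hzero : ∀ i < k, lam i = 0
  · rw [schur_of_forall_eq_zero hzero, det_jacobiTrudi_ite_eq_one hzero]
  · push Not at hzero
    obtain ⟨i, hi, hne⟩ := hzero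
    have hpos : 0 < lam i := (hlam.2 i hi).lt_of_ne' hne
    rw [schur_eq_zero_of_lt hba hi hpos,
      det_jacobiTrudi_ite_eq_zero (by omega) (hpos.trans_le (hlam.le_of_le (Nat.zero_le i) hi))]

theorem schur_eq_det_jacobiTrudi {k a : ℕ} (ha : 1 ≤ a) (b : ℕ) {lam : ℕ → ℤ}
    (hlam : IsPartitionSeq k lam) : schur k lam a b =
      (jacobiTrudi k lam (completeHomogeneous MvPolynomial.X (Finset.Icc a b))).det := by
  induction b generalizing lam with
  | zero => exact schur_eq_det_jacobiTrudi_of_lt hlam ha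
  | succ b ih =>
    rcases lt_or_ge (b + 1) a with hba | hab
    · exact schur_eq_det_jacobiTrudi_of_lt hlam hba
    have hstep := completeHomogeneous_eq_sub_of_insert (R := MvPolynomial ℕ ℤ) MvPolynomial.X
      (s := Finset.Icc a b) (i := b + 1) (by simp)
    rw [Finset.insert_Icc_right_eq_Icc_add_one hab] at hstep
    rw [schur_eq_sum_interlacing hlam hab, det_jacobiTrudi_eq_sum_interlacing hstep hlam
      fun m hm => completeHomogeneous_of_neg _ _ hm]
    refine Finset.sum_congr rfl fun r hr => ?_
    rw [ih ((mem_interlacing.mp hr).isPartitionSeq hlam)]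

theorem stmt_12_general (k a b : ℕ) (hk : 1 ≤ k) (ha : 1 ≤ a) (hab : a ≤ b) (lam : ℕ → ℤ)
    (hdec : ∀ i, i + 1 < k → lam (i + 1) ≤ lam i) (hpos : ∀ i, i < k → 1 ≤ lam i) :
    schur k lam a b * schur (k - 1) lam (a + 1) b =
      schur k lam (a + 1) b * schur (k - 1) lam a b +
        MvPolynomial.X a * schur k (fun j => lam j - 1) a b *
          schur (k - 1) (fun j => lam j + 1) (a + 1) b := by
  obtain ⟨k, rfl⟩ := Nat.exists_eq_add_of_le' hk
  have hlam : IsPartitionSeq (k + 1) lam := ⟨hdec, fun i hi => by have := hpos i hi; omega⟩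
  have hlam' : IsPartitionSeq k lam :=
    ⟨fun i hi => hdec i (by omega), fun i hi => hlam.2 i (by omega)⟩
  have hsub : IsPartitionSeq (k + 1) fun j => lam j - 1 :=
    ⟨fun i hi => by simpa using hdec i hi, fun i hi => by simpa using hpos i hi⟩
  have hadd : IsPartitionSeq k fun j => lam j + 1 :=
    ⟨fun i hi => by simpa using hlam'.1 i hi, fun i hi => by have := hlam'.2 i hi; positivity⟩
  have ha' : 1 ≤ a + 1 := Nat.le_add_left 1 a
  have hstep := completeHomogeneous_eq_sub_of_insert (R := MvPolynomial ℕ ℤ) MvPolynomial.X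
    (s := Finset.Icc (a + 1) b) (i := a) (by simp)
  rw [Finset.insert_Icc_add_one_left_eq_Icc hab] at hstep
  simp only [Nat.add_sub_cancel, schur_eq_det_jacobiTrudi ha b, schur_eq_det_jacobiTrudi ha' b,
    hlam, hlam', hsub, hadd]
  exact det_jacobiTrudi_mul_det_jacobiTrudi hstep k lam

/-- for a partition `λ = (λ_1 ≥ … ≥ λ_k ≥ 1)` and `n ≥ k`:
`s^{[n]}_λ · s^{[2,n]}_{(λ_1,…,λ_{k-1})} = s^{[2,n]}_λ · s^{[n]}_{(λ_1,…,λ_{k-1})}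
 + x_1 · s^{[n]}_{(λ_1-1,…,λ_k-1)} · s^{[2,n]}_{(λ_1+1,…,λ_{k-1}+1)}`. -/
theorem stmt_12 (k n : ℕ) (hk : 1 ≤ k) (hn : k ≤ n) (lam : ℕ → ℤ)
    (hdec : ∀ i, i + 1 < k → lam (i + 1) ≤ lam i) (hpos : ∀ i, i < k → 1 ≤ lam i) :
    schur k lam 1 n * schur (k - 1) lam 2 n =
      schur k lam 2 n * schur (k - 1) lam 1 n +
        MvPolynomial.X 1 * schur k (fun j => lam j - 1) 1 n *
          schur (k - 1) (fun j => lam j + 1) 2 n :=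
  stmt_12_general k 1 n hk le_rfl (hk.trans hn) lam hdec hpos
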